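/- Define a : ℕ → ℕ by a_{ord(J)} := ∏_{k=1}^{t} (|J_k| + 1) for every finite set J of positive integers with runs J_1, …, J_t (so a_m is the absolute value of the m-th diagonal entry of AM_n for any n with m < 2^n). Then a_0 = 1 and, for all m ≥ 0: a_{2m} = a_m, a_{4m+1} = 2·a_{2m}, and a_{4m+3} = 2·a_{2m+1} − a_m. -/

import Mathlib

/-!
Write a set of positive integers as `J = {1, …, k} ∪ T` with every element of `T` at least
`k + 2`. Then `{1, …, k}` (if nonempty) is a run of `J` and the other runs are those of `T`, so
the product for `J` is `(k + 1) · P`, where `P` is the product for `T`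
(`prod_runsOf_initial_union`). Shifting a set by one preserves the product
(`prod_runsOf_shift`) and doubles the ordinal (`ordN_shift`); shifting and adjoining `1`
sends the ordinal `m` to `2m + 1` and the pair `(k, T)` to `(k + 1, T + 1)`
(`ordN_initial_succ_union`).
Hence `a_m`, `a_{2m+1}`, `a_{4m+3}` are `(k+1)P`, `(k+2)P`, `(k+3)P`, an arithmetic progression,
which is the last recursion. For `4m + 1` the initial run is `{1}`, which contributes
the factor `2`.
-/

open Finset

/-- Restriction of a subset of `Fin (n+1)` to `Fin n` (forgetting the top element). -/
def resSet {n : ℕ} (I : Finset (Fin (n + 1))) : Finset (Fin n) :=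
  Finset.univ.filter (fun j : Fin n => Fin.castSucc j ∈ I)

mutual
  /-- The matrix `A_n`, rows/columns indexed by subsets of `{1,…,n}` (element `j`
  of `[n]` corresponds to `j-1 : Fin n`, i.e. anti-lexicographic/binary order). -/
  def Amat : (n : ℕ) → Matrix (Finset (Fin n)) (Finset (Fin n)) ℤ
    | 0 => Matrix.of fun _ _ => 1
    | n + 1 => Matrix.of fun I J =>
        if Fin.last n ∈ I then
          if Fin.last n ∈ J then - Bmat n (resSet I) (resSet J)
          else Amat n (resSet I) (resSet J)
        else Amat n (resSet I) (resSet J)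
  /-- The matrix `B_n`. -/
  def Bmat : (n : ℕ) → Matrix (Finset (Fin n)) (Finset (Fin n)) ℤ
    | 0 => Matrix.of fun _ _ => 1
    | n + 1 => Matrix.of fun I J =>
        if Fin.last n ∈ I then
          if Fin.last n ∈ J then - Bmat n (resSet I) (resSet J)
          else 0
        else Amat n (resSet I) (resSet J)
end

/-- The Walsh-Hadamard matrix `H_n`. -/
def Hmat : (n : ℕ) → Matrix (Finset (Fin n)) (Finset (Fin n)) ℤ
  | 0 => Matrix.of fun _ _ => 1
  | n + 1 => Matrix.of fun I J =>
      if Fin.last n ∈ I ∧ Fin.last n ∈ J then - Hmat n (resSet I) (resSet J)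
      else Hmat n (resSet I) (resSet J)

/-- The Möbius matrix `M_n` of the boolean lattice. -/
def Mobmat (n : ℕ) : Matrix (Finset (Fin n)) (Finset (Fin n)) ℤ :=
  Matrix.of fun I J => if I ⊆ J then (-1) ^ (J \ I).card else 0

/-- The zeta matrix `Z_n` of the boolean lattice. -/
def Zetamat (n : ℕ) : Matrix (Finset (Fin n)) (Finset (Fin n)) ℤ :=
  Matrix.of fun I J => if I ⊆ J then 1 else 0

/-- The subset of `[n] = {1,…,n}` corresponding to a subset of `Fin n`. -/
def natSet {n : ℕ} (I : Finset (Fin n)) : Finset ℕ := Finset.image (fun j : Fin n => (j : ℕ) + 1) I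

/-- The ordinal number of a subset in the anti-lexicographic order. -/
def ordFin {n : ℕ} (I : Finset (Fin n)) : ℕ := ∑ j ∈ I, 2 ^ (j : ℕ)

/-- The run (maximal interval of consecutive integers) of `I` containing `j`
(empty if `j ∉ I`). -/
def runOf (I : Finset ℕ) (j : ℕ) : Finset ℕ :=
  I.filter (fun i => ∀ k ∈ Finset.Icc (min i j) (max i j), k ∈ I)

/-- The set of runs (maximal intervals of consecutive integers) of `I`. -/
def runsOf (I : Finset ℕ) : Finset (Finset ℕ) := I.image (runOf I)

/-- `P` is a prefix of the interval `R`: it consists of an initial segment of `R`. -/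
def IsPrefixOf (P R : Finset ℕ) : Prop :=
  P ⊆ R ∧ ∀ i ∈ R, ∀ j ∈ P, i ≤ j → i ∈ P


/-- The ordinal number `ord(J) = Σ_{j ∈ J} 2^{j-1}` of a finite set of positive
integers. -/
def ordN (J : Finset ℕ) : ℕ := ∑ j ∈ J, 2 ^ (j - 1)

/-- The translate `J + 1`. -/
def shift (J : Finset ℕ) : Finset ℕ := J.image (· + 1)

lemma mem_shift {J : Finset ℕ} {x : ℕ} : x ∈ shift J ↔ ∃ j ∈ J, j + 1 = x := by
  simp [shift]

lemma succ_mem_shift {J : Finset ℕ} {x : ℕ} : x + 1 ∈ shift J ↔ x ∈ J := by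
  simp [shift]

lemma mem_runOf {J : Finset ℕ} {i j : ℕ} :
    i ∈ runOf J j ↔ i ∈ J ∧ ∀ k, min i j ≤ k → k ≤ max i j → k ∈ J := by
  simp only [runOf, Finset.mem_filter, Finset.mem_Icc, and_imp]

lemma runOf_shift (J : Finset ℕ) (j : ℕ) : runOf (shift J) (j + 1) = shift (runOf J j) := by
  ext x
  rcases x with _ | x
  · simp [mem_runOf, mem_shift]
  · rw [succ_mem_shift, mem_runOf, mem_runOf, succ_mem_shift]
    refine and_congr_right fun _ => ⟨fun h k h1 h2 => ?_, fun h k h1 h2 => ?_⟩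
    · exact succ_mem_shift.1 (h (k + 1) (by omega) (by omega))
    · obtain ⟨k, rfl⟩ : ∃ l, k = l + 1 := ⟨k - 1, by omega⟩
      exact succ_mem_shift.2 (h k (by omega) (by omega))

lemma prod_runsOf_shift (J : Finset ℕ) :
    ∏ R ∈ runsOf (shift J), (R.card + 1) = ∏ R ∈ runsOf J, (R.card + 1) := by
  have hinj : Function.Injective shift :=
    Finset.image_injective (add_left_injective 1)
  have h : runsOf (shift J) = (runsOf J).image shift := by
    ext R
    simp only [runsOf, Finset.mem_image, mem_shift]
    constructor
    · rintro ⟨_, ⟨j, hj, rfl⟩, rfl⟩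
      exact ⟨_, ⟨j, hj, rfl⟩, (runOf_shift J j).symm⟩
    · rintro ⟨_, ⟨j, hj, rfl⟩, rfl⟩
      exact ⟨_, ⟨j, hj, rfl⟩, runOf_shift J j⟩
  rw [h, Finset.prod_image fun _ _ _ _ e => hinj e]
  refine Finset.prod_congr rfl fun R _ => ?_
  rw [shift, Finset.card_image_of_injective _ (add_left_injective 1)]

lemma runOf_initial {k : ℕ} {T : Finset ℕ} (hT : ∀ j ∈ T, k + 2 ≤ j) {j : ℕ}
    (hj : j ∈ Finset.Icc 1 k) : runOf (Finset.Icc 1 k ∪ T) j = Finset.Icc 1 k := by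
  have hgap : k + 1 ∉ Finset.Icc 1 k ∪ T := by
    intro h
    rcases Finset.mem_union.1 h with h | h
    · simp at h
    · have := hT _ h
      omega
  rw [Finset.mem_Icc] at hj
  ext x
  simp only [mem_runOf, Finset.mem_union]
  constructor
  · rintro ⟨h | h, h'⟩
    · exact h
    · have := hT _ h
      exact absurd (Finset.mem_union.2 (h' (k + 1) (by omega) (by omega))) hgap
  · intro hx
    refine ⟨Or.inl hx, fun l h1 h2 => Or.inl ?_⟩
    rw [Finset.mem_Icc] at hx ⊢
    omega

lemma runOf_tail {k : ℕ} {T : Finset ℕ} (hT : ∀ j ∈ T, k + 2 ≤ j) {j : ℕ}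
    (hj : j ∈ T) : runOf (Finset.Icc 1 k ∪ T) j = runOf T j := by
  have hgap : k + 1 ∉ Finset.Icc 1 k ∪ T := by
    intro h
    rcases Finset.mem_union.1 h with h | h
    · simp at h
    · have := hT _ h
      omega
  have hj' := hT _ hj
  ext x
  simp only [mem_runOf]
  constructor
  · rintro ⟨h, h'⟩
    have hx : k + 2 ≤ x := by
      by_contra hlt
      exact hgap (h' (k + 1) (by omega) (by omega))
    have key : ∀ l, k + 2 ≤ l → l ∈ Finset.Icc 1 k ∪ T → l ∈ T := by
      intro l hl hm
      rcases Finset.mem_union.1 hm with hm | hm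
      · rw [Finset.mem_Icc] at hm
        omega
      · exact hm
    exact ⟨key x hx h, fun l h1 h2 => key l (by omega) (h' l h1 h2)⟩
  · rintro ⟨h, h'⟩
    exact ⟨Finset.mem_union_right _ h, fun l h1 h2 => Finset.mem_union_right _ (h' l h1 h2)⟩

/-- An initial run of length `k` separated from the rest contributes the factor `k + 1`;
for `k = 0` there is no such run and the factor is `1`. -/
lemma prod_runsOf_initial_union {k : ℕ} {T : Finset ℕ} (hT : ∀ j ∈ T, k + 2 ≤ j) :
    ∏ R ∈ runsOf (Finset.Icc 1 k ∪ T), (R.card + 1) =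
      (k + 1) * ∏ R ∈ runsOf T, (R.card + 1) := by
  rcases Nat.eq_zero_or_pos k with rfl | hk
  · simp
  have h : runsOf (Finset.Icc 1 k ∪ T) = insert (Finset.Icc 1 k) (runsOf T) := by
    rw [runsOf, Finset.image_union, Finset.insert_eq]
    congr 1
    · rw [Finset.image_congr (g := fun _ => Finset.Icc 1 k) fun j hj => runOf_initial hT hj]
      exact Finset.image_const ⟨1, by simp; omega⟩ _
    · exact Finset.image_congr fun j hj => runOf_tail hT hj
  have hnot : Finset.Icc 1 k ∉ runsOf T := by
    intro hm
    obtain ⟨j, -, hj⟩ := Finset.mem_image.1 hm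
    have h1 : 1 ∈ runOf T j := by
      rw [hj, Finset.mem_Icc]
      omega
    have := hT 1 (mem_runOf.1 h1).1
    omega
  rw [h, Finset.prod_insert hnot, Nat.card_Icc, Nat.add_sub_cancel]

lemma ordN_shift {J : Finset ℕ} (hJ : ∀ j ∈ J, 1 ≤ j) : ordN (shift J) = 2 * ordN J := by
  rw [ordN, shift, Finset.sum_image fun _ _ _ _ e => add_left_injective 1 e, ordN,
    Finset.mul_sum]
  refine Finset.sum_congr rfl fun j hj => ?_
  obtain ⟨i, rfl⟩ : ∃ i, j = i + 1 := ⟨j - 1, by have := hJ j hj; omega⟩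
  simp [pow_succ, mul_comm]

lemma le_shift {J : Finset ℕ} {b : ℕ} (hJ : ∀ j ∈ J, b ≤ j) : ∀ j ∈ shift J, b + 1 ≤ j := by
  intro x hx
  obtain ⟨j, hj, rfl⟩ := mem_shift.1 hx
  have := hJ j hj
  omega

lemma one_le_initial_union {k : ℕ} {T : Finset ℕ} (hT : ∀ j ∈ T, k + 2 ≤ j) :
    ∀ j ∈ Finset.Icc 1 k ∪ T, 1 ≤ j := by
  intro j hj
  rcases Finset.mem_union.1 hj with h | h
  · exact (Finset.mem_Icc.1 h).1
  · have := hT j h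
    omega

lemma ordN_initial_succ_union {k : ℕ} {T : Finset ℕ} (hT : ∀ j ∈ T, k + 2 ≤ j) :
    ordN (Finset.Icc 1 (k + 1) ∪ shift T) = 2 * ordN (Finset.Icc 1 k ∪ T) + 1 := by
  have h : Finset.Icc 1 (k + 1) ∪ shift T = insert 1 (shift (Finset.Icc 1 k ∪ T)) := by
    ext x
    rcases x with _ | x
    · simp [mem_shift]
    · simp only [Finset.mem_union, Finset.mem_insert, succ_mem_shift, Finset.mem_Icc]
      constructor
      · rintro (h | h)
        · omega
        · exact Or.inr (Or.inr h)
      · rintro (h | h | h)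
        · omega
        · omega
        · exact Or.inr h
  have hJ := one_le_initial_union hT
  have hnot : 1 ∉ shift (Finset.Icc 1 k ∪ T) := fun h1 => by
    have := le_shift hJ 1 h1
    omega
  rw [h, ← ordN_shift hJ, ordN, Finset.sum_insert hnot, ordN, add_comm]
  simp

/-- Every natural number is the ordinal of a set split into its initial run `{1, …, k}`
(possibly empty) and the part beyond the gap at `k + 1`. -/
lemma exists_initial_union (m : ℕ) : ∃ (k : ℕ) (T : Finset ℕ),
    (∀ j ∈ T, k + 2 ≤ j) ∧ ordN (Finset.Icc 1 k ∪ T) = m := by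
  induction m using Nat.strong_induction_on with
  | _ m ih =>
    rcases Nat.eq_zero_or_pos m with rfl | hm
    · exact ⟨0, ∅, by simp, by simp [ordN]⟩
    obtain ⟨k, T, hT, hord⟩ := ih (m / 2) (by omega)
    rcases Nat.mod_two_eq_zero_or_one m with h0 | h1
    · have hJ := one_le_initial_union hT
      refine ⟨0, shift (Finset.Icc 1 k ∪ T), le_shift hJ, ?_⟩
      rw [Finset.Icc_eq_empty (by omega), Finset.empty_union, ordN_shift hJ, hord]
      omega
    · refine ⟨k + 1, shift T, fun j hj => ?_, ?_⟩
      · have := le_shift hT j hj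
        omega
      · rw [ordN_initial_succ_union hT, hord]
        omega

/-- The sequence `a` defined by `a_{ord(J)} = ∏_k (|J_k|+1)`
(product over the runs of `J`, for finite sets `J` of positive integers) satisfies
`a_0 = 1`, `a_{2m} = a_m`, `a_{4m+1} = 2·a_{2m}` and `a_{4m+3} = 2·a_{2m+1} − a_m`. -/
theorem diag_sequence_recursion (a : ℕ → ℕ)
    (ha : ∀ J : Finset ℕ, (∀ j ∈ J, 1 ≤ j) →
      a (ordN J) = ∏ R ∈ runsOf J, (R.card + 1)) :
    a 0 = 1 ∧
    ∀ m : ℕ, a (2 * m) = a m ∧ a (4 * m + 1) = 2 * a (2 * m) ∧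
      (a (4 * m + 3) : ℤ) = 2 * a (2 * m + 1) - a m := by
  -- `a` at the ordinal of a set with initial run `{1, …, k}`
  have key : ∀ (k : ℕ) (T : Finset ℕ), (∀ j ∈ T, k + 2 ≤ j) →
      a (ordN (Finset.Icc 1 k ∪ T)) = (k + 1) * ∏ R ∈ runsOf T, (R.card + 1) :=
    fun k T hT => (ha _ (one_le_initial_union hT)).trans (prod_runsOf_initial_union hT)
  refine ⟨by simpa [ordN, runsOf] using ha ∅ (by simp), fun m => ?_⟩
  obtain ⟨k, T, hT, rfl⟩ := exists_initial_union m
  have hJ := one_le_initial_union hT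
  set J := Finset.Icc 1 k ∪ T with hJdef
  have hJ1 : ∀ j ∈ shift J, 2 ≤ j := le_shift hJ
  have hT1 : ∀ j ∈ shift T, (k + 1) + 2 ≤ j := fun j hj => by
    have := le_shift hT j hj
    omega
  have hT2 : ∀ j ∈ shift (shift T), (k + 2) + 2 ≤ j := fun j hj => by
    have := le_shift hT1 j hj
    omega
  have e0 := key k T hT
  have e1 := key (k + 1) (shift T) hT1
  have e2 := key (k + 2) (shift (shift T)) hT2
  rw [ordN_initial_succ_union hT1] at e2
  rw [ordN_initial_succ_union hT] at e1 e2
  rw [prod_runsOf_shift] at e1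
  rw [prod_runsOf_shift, prod_runsOf_shift] at e2
  rw [← hJdef] at e0 e1 e2
  have d1 : a (2 * ordN J) = a (ordN J) := by
    rw [← ordN_shift hJ, ha _ (fun j hj => (hJ1 j hj).trans' one_le_two), prod_runsOf_shift,
      ha J hJ]
  -- `4m + 1` comes from the empty initial run with tail `J + 1`, shifted and with `1` adjoined
  have e3 := key 1 (shift (shift J)) (le_shift hJ1)
  have o3 := ordN_initial_succ_union (k := 0) hJ1
  rw [Finset.Icc_eq_empty (a := 1) (b := 0) (by omega), Finset.empty_union, ordN_shift hJ] at o3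
  rw [o3, prod_runsOf_shift, prod_runsOf_shift, ← ha J hJ] at e3
  refine ⟨d1, ?_, ?_⟩
  · rw [d1, show 4 * ordN J + 1 = 2 * (2 * ordN J) + 1 by ring, e3]
  · rw [show 4 * ordN J + 3 = 2 * (2 * ordN J + 1) + 1 by ring, e0, e1, e2]
    push_cast
    ring
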